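/- Let R be a commutative semiring and a₁, …, a_m ∈ R. The R-algebra ∏ᵢ₌₁^m R[1/aᵢ] (product of the localizations of R away from each aᵢ) is faithfully flat over R if and only if a₁, …, a_m generate the unit ideal of R. -/

import Mathlib

/-!
For a commutative semiring `R` and elements `a₁, …, a_m`, the `R`-algebra
`∏ᵢ R[1/aᵢ]` is faithfully flat iff `a₁, …, a_m` generate the unit ideal.
-/

/-!
For a submonoid `W` of `R`, the functor `W⁻¹R ⊗ -` is localization of modules, which preserves
injections and, by clearing denominators, equalizers. A finite product of algebras acts on modules
factorwise, `(∏ Tᵢ) ⊗ N ≃ ∏ (Tᵢ ⊗ N)` naturally in `N` (`piTensor_lTensor`), so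
`S = ∏ R[1/aᵢ]` is always flat, and `S ⊗ φ` is bijective iff every `R[1/aᵢ] ⊗ φ` is.

If the `aᵢ` generate the unit ideal, bijectivity of every localization of `φ` implies bijectivity
of `φ`, so `S` is faithful. Conversely let `I` be the ideal generated by the `aᵢ`. Each
localization of `I → R` is injective, and surjective because its image contains `aᵢ`, which is
invertible in `R[1/aᵢ]`; faithfulness of `S` forces `I → R` to be bijective, that is, `I = R`.
-/

universe u

open TensorProduct

/-- `M` is flat over the commutative semiring `R`: tensoring with `M` preserves
equalizers (hence all finite limits). -/
def IsSemiflat (R : Type u) [CommSemiring R] (M : Type u) [AddCommMonoid M] [Module R M] : Prop :=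
  ∀ (N P : Type u) [AddCommMonoid N] [AddCommMonoid P] [Module R N] [Module R P]
    (f g : N →ₗ[R] P),
    Function.Injective (LinearMap.lTensor M (LinearMap.eqLocus f g).subtype) ∧
    LinearMap.range (LinearMap.lTensor M (LinearMap.eqLocus f g).subtype) =
      LinearMap.eqLocus (LinearMap.lTensor M f) (LinearMap.lTensor M g)

/-- An `R`-module `S` is faithful if a linear map `φ` is an isomorphism whenever
`S ⊗ φ` is. -/
def IsFaithfulMod (R : Type u) [CommSemiring R] (S : Type u) [AddCommMonoid S]
    [Module R S] : Prop :=
  ∀ (M N : Type u) [AddCommMonoid M] [AddCommMonoid N] [Module R M] [Module R N]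
    (φ : M →ₗ[R] N), Function.Bijective (LinearMap.lTensor S φ) → Function.Bijective φ

section Localization

variable {R : Type*} [CommSemiring R] (W : Submonoid R) (A : Type*) [CommSemiring A] [Algebra R A]
  [IsLocalization W A]
  {M N : Type*} [AddCommMonoid M] [AddCommMonoid N] [Module R M] [Module R N]

lemma map_eq_lTensor (φ : M →ₗ[R] N) :
    IsLocalizedModule.map W (TensorProduct.mk R A M 1) (TensorProduct.mk R A N 1) φ =
      LinearMap.lTensor A φ := by
  apply IsLocalizedModule.linearMap_ext W (TensorProduct.mk R A M 1) (TensorProduct.mk R A N 1)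
  rw [IsLocalizedModule.map_comp]
  ext
  simp

include W in
lemma lTensor_injective_of_isLocalization {φ : M →ₗ[R] N} (hφ : Function.Injective φ) :
    Function.Injective (LinearMap.lTensor A φ) := by
  rw [← map_eq_lTensor W]
  exact IsLocalizedModule.map_injective _ _ _ _ hφ

include W in
/-- Localization preserves equalizers, at the level of elements: if `n / s` is equalized by
`W⁻¹f` and `W⁻¹g`, then `c • f n = c • g n` for some `c ∈ W`, so that `n / s = (c • n) / (c * s)`
with `c • n` in the equalizer of `f` and `g`. -/
lemma exists_lTensor_eqLocus_of_isLocalization (f g : M →ₗ[R] N) (x : A ⊗[R] M)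
    (hx : LinearMap.lTensor A f x = LinearMap.lTensor A g x) :
    ∃ y, LinearMap.lTensor A (LinearMap.eqLocus f g).subtype y = x := by
  obtain ⟨⟨n, s⟩, rfl⟩ := IsLocalizedModule.mk'_surjective W (TensorProduct.mk R A M 1) x
  rw [← map_eq_lTensor W, ← map_eq_lTensor W] at hx
  simp only [Function.uncurry_apply_pair, IsLocalizedModule.map_mk',
    IsLocalizedModule.mk'_eq_iff, IsLocalizedModule.mk'_cancel'] at hx
  obtain ⟨c, hc⟩ := IsLocalizedModule.exists_of_eq (S := W) hx
  refine ⟨IsLocalizedModule.mk' (TensorProduct.mk R A _ 1)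
    (⟨c • n, by simpa [Submonoid.smul_def] using hc⟩ : LinearMap.eqLocus f g) (c * s), ?_⟩
  rw [← map_eq_lTensor W, IsLocalizedModule.map_mk']
  exact IsLocalizedModule.mk'_cancel_left _ _ _ _

end Localization

section Pi

variable {R ι : Type*} [CommSemiring R] [Fintype ι] [DecidableEq ι] (T : ι → Type*)
  [∀ i, AddCommMonoid (T i)] [∀ i, Module R (T i)]
  {M N : Type*} [AddCommMonoid M] [AddCommMonoid N] [Module R M] [Module R N]

lemma piTensor_lTensor (φ : M →ₗ[R] N) (x : (∀ i, T i) ⊗[R] M) (i : ι) :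
    TensorProduct.piLeft R N T (LinearMap.lTensor _ φ x) i =
      LinearMap.lTensor (T i) φ (TensorProduct.piLeft R M T x i) := by
  induction x with
  | zero => simp
  | add x y hx hy => simp only [map_add, Pi.add_apply, hx, hy]
  | tmul t m => simp

lemma conj_lTensor (φ : M →ₗ[R] N) :
    TensorProduct.piLeft R N T ∘ LinearMap.lTensor (∀ i, T i) φ =
      Pi.map (fun i ↦ LinearMap.lTensor (T i) φ) ∘ TensorProduct.piLeft R M T := by
  funext x i
  exact piTensor_lTensor T φ x i

lemma lTensor_pi_injective {φ : M →ₗ[R] N}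
    (h : ∀ i, Function.Injective (LinearMap.lTensor (T i) φ)) :
    Function.Injective (LinearMap.lTensor (∀ i, T i) φ) := by
  rw [← (TensorProduct.piLeft R N T).injective.of_comp_iff, conj_lTensor,
    Function.Injective.of_comp_iff' _ (TensorProduct.piLeft R M T).bijective]
  exact Function.Injective.piMap h

lemma lTensor_pi_bijective_iff {φ : M →ₗ[R] N} :
    Function.Bijective (LinearMap.lTensor (∀ i, T i) φ) ↔
      ∀ i, Function.Bijective (LinearMap.lTensor (T i) φ) := by
  rw [← (TensorProduct.piLeft R N T).bijective.of_comp_iff', conj_lTensor,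
    Function.Bijective.of_comp_iff _ (TensorProduct.piLeft R M T).bijective]
  have : ∀ i, Nonempty (T i ⊗[R] M) := fun i ↦ ⟨0⟩
  refine ⟨fun h i ↦ ⟨Pi.map_injective.1 h.1 i, fun z ↦ ?_⟩,
    fun h ↦ ⟨Pi.map_injective.2 fun i ↦ (h i).1, Function.Surjective.piMap fun i ↦ (h i).2⟩⟩
  obtain ⟨y, hy⟩ := h.2 (Pi.single i z)
  exact ⟨y i, by simpa using congrFun hy i⟩

end Pi

lemma isSemiflat_pi_localization {R : Type u} [CommSemiring R] {m : ℕ} (a : Fin m → R) :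
    IsSemiflat R (∀ i, Localization.Away (a i)) := by
  intro N P _ _ _ _ f g
  refine ⟨lTensor_pi_injective _ fun i ↦ lTensor_injective_of_isLocalization
    (.powers (a i)) _ (Submodule.subtype_injective _), le_antisymm ?_ fun x hx ↦ ?_⟩
  · rintro _ ⟨y, rfl⟩
    have h : f ∘ₗ (LinearMap.eqLocus f g).subtype = g ∘ₗ (LinearMap.eqLocus f g).subtype := by
      ext z
      exact z.2
    rw [LinearMap.mem_eqLocus, ← LinearMap.comp_apply, ← LinearMap.comp_apply,
      ← LinearMap.lTensor_comp, ← LinearMap.lTensor_comp, h]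
  · have H (i) := exists_lTensor_eqLocus_of_isLocalization (.powers (a i))
      (Localization.Away (a i)) f g (TensorProduct.piLeft R N _ x i) (by
        have hx' := LinearMap.mem_eqLocus.1 hx
        exact (piTensor_lTensor (fun i ↦ Localization.Away (a i)) f x i).symm.trans
          ((by rw [hx']) : _ = _) |>.trans
          (piTensor_lTensor (fun i ↦ Localization.Away (a i)) g x i))
    choose y hy using H
    refine ⟨(TensorProduct.piLeft R _ _).symm y, (TensorProduct.piLeft R N _).injective ?_⟩
    funext i
    rw [piTensor_lTensor, LinearEquiv.apply_symm_apply, hy]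

/-- The localization away from `r` of the inclusion of an ideal containing `r` is bijective. -/
lemma lTensor_subtype_bijective {R : Type*} [CommSemiring R] (I : Ideal R) {r : R} (hr : r ∈ I) :
    Function.Bijective
      (LinearMap.lTensor (Localization.Away r) (Submodule.subtype I)) := by
  refine ⟨lTensor_injective_of_isLocalization (.powers r) _ (Submodule.subtype_injective _),
    fun x ↦ ?_⟩
  rw [← map_eq_lTensor (.powers r)]
  obtain ⟨⟨n, s⟩, rfl⟩ := IsLocalizedModule.mk'_surjective (.powers r)
    (TensorProduct.mk R (Localization.Away r) R 1) x
  -- `n / s = (r * n) / (r * s)`, and `r * n` lies in `I`.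
  let c : Submonoid.powers r := ⟨r, Submonoid.mem_powers r⟩
  refine ⟨IsLocalizedModule.mk' (TensorProduct.mk R _ _ 1)
    (⟨r * n, I.mul_mem_right n hr⟩ : I) (c * s), ?_⟩
  rw [IsLocalizedModule.map_mk']
  exact IsLocalizedModule.mk'_cancel_left _ n c s

/-- The product of the localizations `R[1/aᵢ]` is faithfully flat over `R` iff the
`aᵢ` generate the unit ideal of `R`. -/
theorem prod_localization_faithfully_flat_iff (R : Type u) [CommSemiring R]
    (m : ℕ) (a : Fin m → R) :
    (IsSemiflat R (∀ i, Localization.Away (a i)) ∧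
     IsFaithfulMod R (∀ i, Localization.Away (a i))) ↔
    Ideal.span (Set.range a) = ⊤ := by
  refine ⟨fun ⟨_, h⟩ ↦ ?_, fun h ↦ ⟨isSemiflat_pi_localization a, fun M N _ _ _ _ φ hφ ↦ ?_⟩⟩
  · have := h _ _ (Submodule.subtype (Ideal.span (Set.range a)))
      ((lTensor_pi_bijective_iff _).2 fun i ↦
        lTensor_subtype_bijective _ (Ideal.subset_span ⟨i, rfl⟩))
    rw [← Submodule.range_subtype (Ideal.span (Set.range a))]
    exact LinearMap.range_eq_top.2 this.2
  · rw [lTensor_pi_bijective_iff] at hφ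
    refine bijective_of_isLocalized_span (Set.range a) h
      (fun r ↦ Localization.Away r.1 ⊗[R] M) (fun r ↦ TensorProduct.mk R _ M 1)
      (fun r ↦ Localization.Away r.1 ⊗[R] N) (fun r ↦ TensorProduct.mk R _ N 1) φ ?_
    rintro ⟨_, i, rfl⟩
    rw [map_eq_lTensor]
    exact hφ i
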